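/- Let H' and Y be nonempty finite sets with scenarios ξ_h ∈ ℝ^q for h ∈ H' and recourses y ∈ Y ⊆ ℝ^m, let Q ∈ ℝ^{q×m}, set c(h,y) := ξ_hᵀQ y, let K ≥ 1 be an integer, and let M ∈ ℝ satisfy M ≥ max_{(h,y)∈H'×Y} c(h,y) − min_{(h,y)∈H'×Y} c(h,y). Then the optimal value of the big-M program — minimize γ ∈ ℝ over all (y^1,…,y^K) ∈ Y^K, u : H' → {1,…,K}, and γ satisfying c(h, y^k) ≤ γ + M·(1 − [u(h) = k]) for all k ∈ {1,…,K} and h ∈ H', where [u(h)=k] is 1 if u(h)=k and 0 otherwise — equals min_{(y^1,…,y^K)∈Y^K} max_{h∈H'} min_{k∈[K]} c(h, y^k). That is, the big-M linearization of the solution-generation problem is exact for sufficiently large M. -/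

import Mathlib

/-!
Both value sets are compared directly. A max-min value `t` of a recourse tuple is itself feasible
for the big-M program: assign each scenario `h` to a minimizing index; the constraint at that index
is `min_k c(h, y^k) ≤ t`, and at the other indices the slack `M` covers the whole spread of `c`,
since `t` is at least the global minimum of `c`. Conversely, the constraint of a feasible point at
`k = u h` bounds `c(h, y^{u h})` by `γ`, so the max-min value of the same tuple is at most `γ`.
-/

open Matrix

/-- The big-M linearization of the solution-generation problem is exact when
`M ≥ max_{(h,y)} c(h,y) − min_{(h,y)} c(h,y)`: its optimal value equals
`min_{(y^1,…,y^K)∈Y^K} max_{h∈H'} min_{k∈[K]} c(h, y^k)`. -/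
theorem stmt_8 {q m : ℕ} {H' : Type*} [Fintype H'] [Nonempty H']
    (Q : Matrix (Fin q) (Fin m) ℝ) (ξ : H' → Fin q → ℝ)
    (Y : Finset (Fin m → ℝ)) (hY : Y.Nonempty)
    (K : ℕ) (hK : 1 ≤ K) (M : ℝ)
    (hM : (Finset.univ.sup' Finset.univ_nonempty fun h : H' =>
            Y.sup' hY fun y => ξ h ⬝ᵥ Q.mulVec y)
        - (Finset.univ.inf' Finset.univ_nonempty fun h : H' =>
            Y.inf' hY fun y => ξ h ⬝ᵥ Q.mulVec y) ≤ M) :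
    sInf {γ : ℝ | ∃ (ys : Fin K → Fin m → ℝ) (u : H' → Fin K),
        (∀ k, ys k ∈ Y) ∧
        ∀ (k : Fin K) (h : H'),
          ξ h ⬝ᵥ Q.mulVec (ys k) ≤ γ + M * (1 - if u h = k then 1 else 0)} =
      sInf {t : ℝ | ∃ ys : Fin K → Fin m → ℝ, (∀ k, ys k ∈ Y) ∧
        t = ⨆ h : H', ⨅ k : Fin K, ξ h ⬝ᵥ Q.mulVec (ys k)} := by
  haveI : Nonempty (Fin K) := ⟨⟨0, hK⟩⟩
  set a := Finset.univ.inf' Finset.univ_nonempty fun h : H' =>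
    Y.inf' hY fun y => ξ h ⬝ᵥ Q.mulVec y with ha
  set b := Finset.univ.sup' Finset.univ_nonempty fun h : H' =>
    Y.sup' hY fun y => ξ h ⬝ᵥ Q.mulVec y with hb
  have lo : ∀ h, ∀ y ∈ Y, a ≤ ξ h ⬝ᵥ Q.mulVec y := fun h y hy =>
    (Finset.inf'_le _ (Finset.mem_univ h)).trans
      (Finset.inf'_le (fun y => ξ h ⬝ᵥ Q.mulVec y) hy)
  have hi : ∀ h, ∀ y ∈ Y, ξ h ⬝ᵥ Q.mulVec y ≤ b := fun h y hy =>
    (Finset.le_sup' (fun y => ξ h ⬝ᵥ Q.mulVec y) hy).trans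
      (Finset.le_sup' (fun h : H' => Y.sup' hY fun y => ξ h ⬝ᵥ Q.mulVec y) (Finset.mem_univ h))
  set S := {γ : ℝ | ∃ (ys : Fin K → Fin m → ℝ) (u : H' → Fin K),
        (∀ k, ys k ∈ Y) ∧
        ∀ (k : Fin K) (h : H'),
          ξ h ⬝ᵥ Q.mulVec (ys k) ≤ γ + M * (1 - if u h = k then 1 else 0)} with hS
  set T := {t : ℝ | ∃ ys : Fin K → Fin m → ℝ, (∀ k, ys k ∈ Y) ∧
        t = ⨆ h : H', ⨅ k : Fin K, ξ h ⬝ᵥ Q.mulVec (ys k)} with hT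
  have hTS : T ⊆ S := by
    rintro t ⟨ys, hys, rfl⟩
    choose u hu using fun h : H' =>
      exists_eq_ciInf_of_finite (f := fun k : Fin K => ξ h ⬝ᵥ Q.mulVec (ys k))
    have hle : ∀ h, ξ h ⬝ᵥ Q.mulVec (ys (u h)) ≤
        ⨆ h : H', ⨅ k : Fin K, ξ h ⬝ᵥ Q.mulVec (ys k) := fun h =>
      (hu h).le.trans (le_ciSup (f := fun h : H' => ⨅ k : Fin K, ξ h ⬝ᵥ Q.mulVec (ys k))
        (Set.finite_range _).bddAbove h)
    refine ⟨ys, u, hys, fun k h => ?_⟩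
    by_cases hk : u h = k
    · subst hk
      simpa using hle h
    · have h1 := hle h
      have h2 := lo h _ (hys (u h))
      have h3 := hi h _ (hys k)
      rw [if_neg hk]
      linarith
  have hSbdd : BddBelow S := by
    refine ⟨a, ?_⟩
    rintro γ ⟨ys, u, hys, hc⟩
    obtain ⟨h⟩ := ‹Nonempty H'›
    have h1 := hc (u h) h
    have h2 := lo h _ (hys (u h))
    rw [if_pos rfl] at h1
    linarith
  have hTne : T.Nonempty := by
    obtain ⟨y, hy⟩ := hY
    exact ⟨_, fun _ => y, fun _ => hy, rfl⟩
  refine le_antisymm (csInf_le_csInf hSbdd hTne hTS) (le_csInf (hTne.mono hTS) ?_)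
  rintro γ ⟨ys, u, hys, hc⟩
  refine (csInf_le (hSbdd.mono hTS) ⟨ys, hys, rfl⟩).trans (ciSup_le fun h => ?_)
  refine (ciInf_le (Set.finite_range _).bddBelow (u h)).trans ?_
  simpa using hc (u h) h
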